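/- Let α ∈ ℝ, v > 0, and μ_{G1}, μ_{P1}, μ_{P2} ∈ ℝ. Define the mixture densities ρ₁(λ) = α·N(λ; μ_{G1}, v) + (1−α)·N(λ; μ_{P1}, v) and ρ₂(λ) = α·N(λ; μ_{G1}, v) + (1−α)·N(λ; μ_{P2}, v). Then ∫ (ρ₁(λ) − ρ₂(λ))² dλ = 2(1−α)²·(A − N(μ_{P1}; μ_{P2}, 2v)), where A = 1/√(4πv). -/

import Mathlib

open MeasureTheory Real

/-- The Gaussian probability density on `ℝ` with mean `μ` and variance `v`:
`N(x; μ, v) = (2πv)^{-1/2} exp(-(x-μ)²/(2v))`. -/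
noncomputable def gaussPdf (μ v x : ℝ) : ℝ :=
    (Real.sqrt (2 * Real.pi * v))⁻¹ * Real.exp (-(x - μ) ^ 2 / (2 * v))

theorem gaussPdf_eq (m w : ℝ) (hw : 0 < w) :
    gaussPdf m w = ProbabilityTheory.gaussianPDFReal m w.toNNReal := by
  funext x
  simp only [gaussPdf, ProbabilityTheory.gaussianPDFReal, Real.coe_toNNReal w hw.le]

theorem gaussPdf_mul (a b v x : ℝ) (hv : 0 < v) :
    gaussPdf a v x * gaussPdf b v x
      = gaussPdf b (2 * v) a * gaussPdf ((a + b) / 2) (v / 2) x := by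
  unfold gaussPdf
  rw [mul_mul_mul_comm, mul_mul_mul_comm (Real.sqrt (2 * Real.pi * (2 * v)))⁻¹, ← Real.exp_add, ← Real.exp_add, ← mul_inv, ← mul_inv,
    ← Real.sqrt_mul (by positivity), ← Real.sqrt_mul (by positivity)]
  congr 1
  · congr 2
    ring
  · congr 1
    field_simp
    ring

theorem gaussPdf_mul_integrable (a b v : ℝ) (hv : 0 < v) :
    Integrable (fun x => gaussPdf a v x * gaussPdf b v x) := by
  simp only [gaussPdf_mul a b v _ hv]
  rw [gaussPdf_eq _ (v / 2) (by positivity)]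
  exact (ProbabilityTheory.integrable_gaussianPDFReal _ _).const_mul _

theorem gaussPdf_mul_integral (a b v : ℝ) (hv : 0 < v) :
    ∫ x, gaussPdf a v x * gaussPdf b v x = gaussPdf b (2 * v) a := by
  have hv2 : 0 < v / 2 := by positivity
  simp only [gaussPdf_mul a b v _ hv]
  rw [integral_const_mul, gaussPdf_eq _ (v / 2) hv2,
    ProbabilityTheory.integral_gaussianPDFReal_eq_one, mul_one]
  exact (Real.toNNReal_pos.mpr hv2).ne'

theorem gaussPdf_self (a v : ℝ) : gaussPdf a (2 * v) a = 1 / Real.sqrt (4 * Real.pi * v) := by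
  unfold gaussPdf
  rw [show 2 * Real.pi * (2 * v) = 4 * Real.pi * v by ring]
  simp

/-- Equation 9 of the paper: with `ρ₁ = α·N(·; μG1, v) + (1-α)·N(·; μP1, v)` and
`ρ₂ = α·N(·; μG1, v) + (1-α)·N(·; μP2, v)`, one has
`∫ (ρ₁ - ρ₂)² = 2(1-α)²(A - N(μP1; μP2, 2v))` where `A = 1/√(4πv)`. -/
theorem mixture_L2_dist_rho1_rho2 (α v μG1 μP1 μP2 : ℝ) (hv : 0 < v) :
    ∫ lam : ℝ,
        ((α * gaussPdf μG1 v lam + (1 - α) * gaussPdf μP1 v lam) -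
          (α * gaussPdf μG1 v lam + (1 - α) * gaussPdf μP2 v lam)) ^ 2 =
      2 * (1 - α) ^ 2 *
        (1 / Real.sqrt (4 * Real.pi * v) - gaussPdf μP2 (2 * v) μP1) := by
  have e : ∀ x : ℝ, ((α * gaussPdf μG1 v x + (1 - α) * gaussPdf μP1 v x) -
          (α * gaussPdf μG1 v x + (1 - α) * gaussPdf μP2 v x)) ^ 2
      = (1 - α) ^ 2 * (gaussPdf μP1 v x * gaussPdf μP1 v x
        + gaussPdf μP2 v x * gaussPdf μP2 v x
        - 2 * (gaussPdf μP1 v x * gaussPdf μP2 v x)) := fun x => by ring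
  simp only [e]
  have h1 := gaussPdf_mul_integrable μP1 μP1 v hv
  have h2 := gaussPdf_mul_integrable μP2 μP2 v hv
  have h3 := gaussPdf_mul_integrable μP1 μP2 v hv
  rw [integral_const_mul, integral_sub (h1.fun_add h2) (h3.const_mul 2), integral_add h1 h2,
    integral_const_mul, gaussPdf_mul_integral _ _ _ hv, gaussPdf_mul_integral _ _ _ hv,
    gaussPdf_mul_integral _ _ _ hv, gaussPdf_self, gaussPdf_self]
  ring
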